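/- For 0 < α < 1 and all z ∈ 𝔻, the quantity Re(1 + z·h_α''(z)/h_α'(z)) satisfies: Re(1 + z·h_α''(z)/h_α'(z)) ≥ (4α−1)/5 when 1/2 ≤ α < 1, and Re(1 + z·h_α''(z)/h_α'(z)) ≥ α/(3−α) when 0 < α ≤ 1/2. -/

import Mathlib

/-- The unit disk `{z : ℂ | |z| < 1}`. -/
noncomputable def unitDisk : Set ℂ := Metric.ball 0 1

/-- The extremal convex function of order `α`:
`k_α(z) = ((1-z)^(2α-1) - 1)/(1-2α)` (so that `k_α(0)=0`, `k_α'(0)=1`),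
with `k_{1/2}(z) = -log(1-z)` (principal branches). -/
noncomputable def kfun (α : ℝ) (z : ℂ) : ℂ :=
  if α = 1 / 2 then -Complex.log (1 - z)
  else ((1 - z) ^ ((2 * α - 1 : ℝ) : ℂ) - 1) / ((1 - 2 * α : ℝ) : ℂ)

/-- `h_α(z) = k_α(z)/z` for `z ≠ 0`, `h_α(0) = 1`. -/
noncomputable def hfun (α : ℝ) (z : ℂ) : ℂ :=
  if z = 0 then 1 else kfun α z / z

/-- `f ∈ K(α)`: `f` is analytic on the unit disk, normalized by `f(0)=0`, `f'(0)=1`,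
with nonvanishing derivative and `Re(1 + z f''(z)/f'(z)) > α` on the disk. -/
def IsConvexOfOrder (α : ℝ) (f : ℂ → ℂ) : Prop :=
  DifferentiableOn ℂ f unitDisk ∧ f 0 = 0 ∧ deriv f 0 = 1 ∧
    ∀ z ∈ unitDisk, deriv f z ≠ 0 ∧
      α < (1 + z * deriv (deriv f) z / deriv f z).re

theorem one_sub_mem_slitPlane {z : ℂ} (hz : ‖z‖ < 1) : 1 - z ∈ Complex.slitPlane := by
  left
  simpa using (abs_lt.1 ((Complex.abs_re_le_norm z).trans_lt hz)).2

theorem hasDerivAt_kfun {α : ℝ} {z : ℂ} (hz : ‖z‖ < 1) :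
    HasDerivAt (kfun α) ((1 - z) ^ ((2 * α - 2 : ℝ) : ℂ)) z := by
  have hslit := one_sub_mem_slitPlane hz
  have hlin : HasDerivAt (fun z : ℂ => 1 - z) (-1) z := by
    simpa using (hasDerivAt_id z).const_sub 1
  by_cases hα : α = 1 / 2
  · have hk : kfun α = fun z => -Complex.log (1 - z) := by
      funext z; simp [kfun, hα]
    rw [hk]
    refine (hlin.clog hslit).neg.congr_deriv ?_
    rw [hα]
    norm_num [Complex.cpow_neg_one, neg_div]
  · have hk : kfun α = fun z => ((1 - z) ^ ((2 * α - 1 : ℝ) : ℂ) - 1) / ((1 - 2 * α : ℝ) : ℂ) := by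
      funext z; simp only [kfun, if_neg hα]
    rw [hk]
    refine (((hlin.cpow_const (c := ((2 * α - 1 : ℝ) : ℂ)) hslit).sub_const 1).div_const
      ((1 - 2 * α : ℝ) : ℂ)).congr_deriv ?_
    have hne : ((1 - 2 * α : ℝ) : ℂ) ≠ 0 := by
      rw [Complex.ofReal_ne_zero]; intro h; apply hα; linarith
    have hexp : ((2 * α - 1 : ℝ) : ℂ) - 1 = ((2 * α - 2 : ℝ) : ℂ) := by push_cast; ring
    rw [hexp, div_eq_iff hne]
    push_cast; ring

theorem kfun_zero (α : ℝ) : kfun α 0 = 0 := by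
  simp [kfun]

theorem hfun_eq_dslope (α : ℝ) : hfun α = dslope (kfun α) 0 := by
  funext z
  by_cases hz : z = 0
  · subst hz
    simp [hfun, (hasDerivAt_kfun (α := α) (z := 0) (by simp)).deriv]
  · rw [dslope_of_ne _ hz]
    simp [hfun, hz, slope, kfun_zero, div_eq_inv_mul]

/-- Jack's lemma on the disk of radius `‖z₀‖`. -/
theorem exists_one_le_mul_deriv_eq_of_norm_eq_one {w : ℂ → ℂ} {z₀ : ℂ} (hz₀ : z₀ ≠ 0)
    (hw : DifferentiableOn ℂ w (Metric.ball 0 ‖z₀‖))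
    (hmaps : Set.MapsTo w (Metric.ball 0 ‖z₀‖) (Metric.ball 0 1)) (hw0 : w 0 = 0)
    (hcont : ContinuousOn w (Metric.closedBall 0 ‖z₀‖))
    (hd : DifferentiableAt ℂ w z₀) (hone : ‖w z₀‖ = 1) :
    ∃ m : ℝ, 1 ≤ m ∧ z₀ * deriv w z₀ = m * w z₀ := by
  have hr : 0 < ‖z₀‖ := norm_pos_iff.2 hz₀
  have hle : ∀ z ∈ Metric.closedBall (0 : ℂ) ‖z₀‖, ‖w z‖ ≤ 1 := by
    rw [← closure_ball (0 : ℂ) hr.ne'] at hcont ⊢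
    intro z hz
    refine le_on_closure (f := fun z => ‖w z‖) (g := fun _ => 1) ?_ hcont.norm
      continuousOn_const hz
    intro z hz
    simpa using (Metric.mem_ball.1 (hmaps hz)).le
  have key : ∀ γ : ℝ → ℂ, ∀ v : ℂ, ∀ t : ℝ, γ t = z₀ → HasDerivAt γ v t →
      HasDerivAt (fun s => ‖w (γ s)‖ ^ 2)
        (2 * (v * deriv w z₀ * (starRingEnd ℂ) (w z₀)).re) t := by
    intro γ v t ht hγ
    have h1 : HasDerivAt (fun s => w (γ s)) (deriv w z₀ * v) t := by
      subst ht
      exact hd.hasDerivAt.comp t hγ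
    refine h1.norm_sq.congr_deriv ?_
    simp [ht, Complex.inner]
    ring
  set q : ℂ := z₀ * deriv w z₀ * (starRingEnd ℂ) (w z₀) with hq
  have him : q.im = 0 := by
    have hγ : HasDerivAt (fun s : ℝ => Complex.exp (s * Complex.I) * z₀) (Complex.I * z₀) 0 := by
      have h := (((Complex.ofRealCLM.hasDerivAt (x := (0 : ℝ))).mul_const
        Complex.I).cexp).mul_const z₀
      simpa using h
    have h2 := key _ _ 0 (by simp) hγ
    have hmax : IsLocalMax (fun s : ℝ => ‖w (Complex.exp (s * Complex.I) * z₀)‖ ^ 2) 0 := by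
      refine Filter.Eventually.of_forall fun s => ?_
      simp only [Complex.ofReal_zero, zero_mul, Complex.exp_zero, one_mul, hone, one_pow]
      exact pow_le_one₀ (norm_nonneg _)
        (hle _ (by simp [Complex.norm_exp_ofReal_mul_I]))
    have h3 := hmax.hasDerivAt_eq_zero h2
    have h4 : Complex.I * z₀ * deriv w z₀ * (starRingEnd ℂ) (w z₀) = Complex.I * q := by
      rw [hq]; ring
    rw [h4, Complex.I_mul_re] at h3
    linarith
  have hre : 1 ≤ q.re := by
    have hγ : HasDerivAt (fun s : ℝ => (s : ℂ) * z₀) z₀ 1 := by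
      simpa using (Complex.ofRealCLM.hasDerivAt (x := (1 : ℝ))).mul_const z₀
    have h2 := (key _ _ 1 (by simp) hγ).sub ((hasDerivAt_id (1 : ℝ)).pow 2)
    rw [← hq] at h2
    have h3 := (hasDerivWithinAt_iff_tendsto_slope' (s := Set.Iio (1 : ℝ)) (by simp)).1
      h2.hasDerivWithinAt
    have h4 : 0 ≤ 2 * q.re - 2 := by
      refine ge_of_tendsto (by simpa only [id, Nat.cast_ofNat, one_pow, mul_one] using h3) ?_
      filter_upwards [Ioo_mem_nhdsLT (zero_lt_one' ℝ)] with s hs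
      have hmem : (s : ℂ) * z₀ ∈ Metric.ball (0 : ℂ) ‖z₀‖ := by
        simpa [abs_of_pos hs.1] using mul_lt_of_lt_one_left hr hs.2
      have h5 : ‖w (s * z₀)‖ ≤ s := by
        have := Complex.dist_le_div_mul_dist_of_mapsTo_ball (R₂ := 1) hw
          (by rw [hw0]; exact hmaps.mono_right Metric.ball_subset_closedBall) hmem
        rw [hw0] at this
        simpa [abs_of_pos hs.1, hr.ne', mul_left_comm] using this
      have h6 : ‖w (s * z₀)‖ ^ 2 ≤ s ^ 2 := pow_le_pow_left₀ (norm_nonneg _) h5 2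
      rw [slope_def_field]
      refine div_nonneg_of_nonpos ?_ (by linarith [hs.2])
      simpa [hone] using h6
    linarith
  refine ⟨q.re, hre, ?_⟩
  have h1 : (q.re : ℂ) = q := by
    apply Complex.ext <;> simp [him]
  rw [h1, hq, mul_assoc, ← Complex.normSq_eq_conj_mul_self, Complex.normSq_eq_norm_sq, hone]
  simp


/-- The contradiction between Jack's lemma and the Riccati equation at a boundary point. -/
theorem riccati_boundary_false {δ γ m : ℝ} (hδ : 1 / 2 ≤ δ) (hδ1 : δ < 1) (hγ0 : 0 < γ)
    (hγ : γ ≤ (1 - δ) * (4 + 1 / δ)) (hm : 1 ≤ m) {g u : ℂ} (hu : -1 / 2 < u.re)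
    (hg : ‖2 * δ * g - 1‖ = 1)
    (h : (1 - g) * (4 * (1 - δ) + m * (1 + (1 - 2 * δ) * g)) = 2 * (1 - δ) * g * (γ * u)) :
    False := by
  have hδ0 : 0 < δ := by linarith
  have hg0 : g ≠ 0 := by
    rintro rfl
    have h1 := congrArg Complex.re h
    simp at h1
    linarith
  obtain ⟨p, hp⟩ : ∃ p : ℂ, p = g⁻¹ := ⟨_, rfl⟩
  have hp0 : p ≠ 0 := hp ▸ inv_ne_zero hg0
  have hgp : g = p⁻¹ := by rw [hp, inv_inv]
  have hpre : p.re = δ := by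
    have h1 : ‖2 * δ - p‖ = ‖p‖ := by
      have : (2 * δ - p : ℂ) = (2 * δ * g - 1) * p := by rw [hgp]; field_simp
      rw [this, norm_mul, hg, one_mul]
    have h2 : ‖2 * δ - p‖ ^ 2 = ‖p‖ ^ 2 := by rw [h1]
    rw [← Complex.normSq_eq_norm_sq, ← Complex.normSq_eq_norm_sq, Complex.normSq_apply,
      Complex.normSq_apply] at h2
    simp at h2
    have h3 : δ * (p.re - δ) = 0 := by nlinarith
    rcases mul_eq_zero.1 h3 with h4 | h4 <;> linarith
  have hmain : (p - 1) * (4 * (1 - δ)) + m * (p - 2 * δ - (1 - 2 * δ) * p⁻¹)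
      = 2 * (1 - δ) * (γ * u) := by
    rw [hgp] at h
    field_simp at h ⊢
    linear_combination h
  have hre := congrArg Complex.re hmain
  have hinv : p⁻¹.re ≤ 1 / δ := by
    have hpos : 0 < δ * δ + p.im * p.im := by nlinarith [mul_self_nonneg p.im]
    rw [Complex.inv_re, Complex.normSq_apply, hpre, div_le_div_iff₀ hpos hδ0]
    nlinarith [mul_self_nonneg p.im]
  have hre' : (δ - 1) * (4 * (1 - δ)) + m * (-δ + (2 * δ - 1) * p⁻¹.re)
      = 2 * (1 - δ) * (γ * u.re) := by
    rw [← hpre]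
    simp [← hpre] at hre ⊢
    linarith
  have h5 : -δ + (2 * δ - 1) * p⁻¹.re ≤ -((1 - δ) ^ 2 / δ) := by
    have h6 : (2 * δ - 1) * p⁻¹.re ≤ (2 * δ - 1) * (1 / δ) :=
      mul_le_mul_of_nonneg_left hinv (by linarith)
    have h7 : -δ + (2 * δ - 1) * (1 / δ) = -((1 - δ) ^ 2 / δ) := by field_simp; ring
    linarith
  have h8 : m * (-δ + (2 * δ - 1) * p⁻¹.re) ≤ -((1 - δ) ^ 2 / δ) := by
    have : 0 ≤ (1 - δ) ^ 2 / δ := by positivity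
    nlinarith
  have h9 : -((1 - δ) * γ) < 2 * (1 - δ) * (γ * u.re) := by
    have : 0 < (1 - δ) * γ := mul_pos (by linarith) hγ0
    nlinarith
  have h10 : (1 - δ) * γ ≤ (1 - δ) * ((1 - δ) * (4 + 1 / δ)) :=
    mul_le_mul_of_nonneg_left hγ (by linarith)
  have h11 : (1 - δ) * ((1 - δ) * (4 + 1 / δ)) = 4 * (1 - δ) ^ 2 + (1 - δ) ^ 2 / δ := by ring
  nlinarith

theorem neg_half_lt_re_div_one_sub {z : ℂ} (hz : ‖z‖ < 1) : -1 / 2 < (z / (1 - z)).re := by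
  have h1 : Complex.normSq z < 1 := by
    rw [Complex.normSq_eq_norm_sq]
    exact pow_lt_one₀ (norm_nonneg _) hz two_ne_zero
  have h2 : 0 < Complex.normSq (1 - z) := by
    rw [Complex.normSq_pos, sub_ne_zero]
    rintro rfl
    simp at hz
  rw [Complex.div_re, ← add_div, lt_div_iff₀ h2]
  rw [Complex.normSq_apply] at h1 ⊢
  simp
  nlinarith

/-- Solutions of the Riccati equation satisfied by `(1 - z) ^ γ * ₂F₁(2, γ; 3; z)` stay in the disk
with diameter `[0, 1 / δ]`. -/
theorem norm_two_mul_sub_one_le_of_riccati {δ γ : ℝ} (hδ : 1 / 2 ≤ δ) (hδ1 : δ < 1) (hγ0 : 0 < γ)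
    (hγ : γ ≤ (1 - δ) * (4 + 1 / δ)) {G : ℂ → ℂ}
    (hG : DifferentiableOn ℂ G (Metric.ball 0 1)) (hG0 : G 0 = 1)
    (hode : ∀ z ∈ Metric.ball (0 : ℂ) 1,
      z * deriv G z = 2 * (1 - G z) - G z * (γ * (z / (1 - z)))) :
    ∀ z ∈ Metric.ball (0 : ℂ) 1, ‖2 * δ * G z - 1‖ ≤ 1 := by
  intro z₁ hz₁
  by_contra! hlt
  have hz₁' : ‖z₁‖ < 1 := by simpa using hz₁
  have hsub : Metric.closedBall (0 : ℂ) ‖z₁‖ ⊆ Metric.ball 0 1 :=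
    Metric.closedBall_subset_ball hz₁'
  have hN : ContinuousOn (fun z => ‖2 * δ * G z - 1‖) (Metric.ball 0 1) :=
    ((continuousOn_const.mul hG.continuousOn).sub continuousOn_const).norm
  have hS : IsCompact (Metric.closedBall (0 : ℂ) ‖z₁‖ ∩
      (fun z => ‖2 * δ * G z - 1‖) ⁻¹' Set.Ici 1) :=
    (isCompact_closedBall _ _).of_isClosed_subset
      ((hN.mono hsub).preimage_isClosed_of_isClosed Metric.isClosed_closedBall isClosed_Ici)
      Set.inter_subset_left
  obtain ⟨z₀, ⟨hz₀S, hz₀N⟩, hmin⟩ := hS.exists_isMinOn ⟨z₁, by simp, hlt.le⟩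
    (continuous_norm (E := ℂ)).continuousOn
  have hz₀1 : z₀ ∈ Metric.ball (0 : ℂ) 1 := hsub hz₀S
  have hz₀0 : z₀ ≠ 0 := by
    rintro rfl
    have h1 : (1 : ℝ) ≤ ‖(2 * δ * G 0 - 1 : ℂ)‖ := hz₀N
    have h2 : (2 * δ * 1 - 1 : ℂ) = ((2 * δ - 1 : ℝ) : ℂ) := by push_cast; ring
    rw [hG0, h2, Complex.norm_real, Real.norm_eq_abs, abs_of_nonneg (by linarith)] at h1
    linarith
  have hr : 0 < ‖z₀‖ := norm_pos_iff.2 hz₀0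
  have hball : ∀ z ∈ Metric.ball (0 : ℂ) ‖z₀‖, ‖2 * δ * G z - 1‖ < 1 := by
    intro z hz
    by_contra! hge
    have hz' : ‖z‖ < ‖z₀‖ := by simpa using hz
    have hzS : z ∈ Metric.closedBall (0 : ℂ) ‖z₁‖ := by
      simpa using hz'.le.trans (by simpa using hz₀S)
    exact absurd (hmin ⟨hzS, hge⟩) (not_le.2 hz')
  have hsub₀ : Metric.closedBall (0 : ℂ) ‖z₀‖ ⊆ Metric.ball 0 1 :=
    Metric.closedBall_subset_ball (by simpa using hz₀1)
  have hcball : ∀ z ∈ Metric.closedBall (0 : ℂ) ‖z₀‖, ‖2 * δ * G z - 1‖ ≤ 1 := by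
    have hc := hN.mono hsub₀
    rw [← closure_ball (0 : ℂ) hr.ne'] at hc ⊢
    exact fun z hz => le_on_closure (g := fun _ => (1 : ℝ)) (fun z hz => (hball z hz).le) hc
      continuousOn_const hz
  have hone : ‖2 * δ * G z₀ - 1‖ = 1 := le_antisymm (hcball z₀ (by simp)) hz₀N
  -- The Möbius map `w = (1 - G) / (1 + (1 - 2δ) G)` takes the disk to the unit disk.
  have hsq : ∀ g : ℂ, Complex.normSq (1 + (1 - 2 * δ) * g) - Complex.normSq (1 - g)
      = (1 - δ) / δ * (1 - ‖2 * δ * g - 1‖ ^ 2) := by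
    intro g
    have hδ0 : δ ≠ 0 := by linarith
    rw [← Complex.normSq_eq_norm_sq]
    simp only [Complex.normSq_apply]
    simp
    field_simp
    ring
  have hcoef : 0 < (1 - δ) / δ := div_pos (by linarith) (by linarith)
  have hden : ∀ z ∈ Metric.closedBall (0 : ℂ) ‖z₀‖, (1 + (1 - 2 * δ) * G z : ℂ) ≠ 0 := by
    intro z hz h0
    have h1 := hsq (G z)
    have h2 : ‖2 * δ * G z - 1‖ ^ 2 ≤ 1 := pow_le_one₀ (norm_nonneg _) (hcball z hz)
    rw [h0] at h1
    simp only [map_zero, zero_sub] at h1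
    have h3 : Complex.normSq (1 - G z) = 0 := by
      nlinarith [Complex.normSq_nonneg (1 - G z)]
    have h4 : G z = 1 := (sub_eq_zero.1 (Complex.normSq_eq_zero.1 h3)).symm
    rw [h4] at h0
    have h5 := congrArg Complex.re h0
    simp at h5
    linarith
  have hGd : ∀ z ∈ Metric.closedBall (0 : ℂ) ‖z₀‖, HasDerivAt G (deriv G z) z := fun z hz =>
    (hG.differentiableAt (Metric.isOpen_ball.mem_nhds (hsub₀ hz))).hasDerivAt
  have hwd : ∀ z ∈ Metric.closedBall (0 : ℂ) ‖z₀‖,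
      HasDerivAt (fun z => (1 - G z) / (1 + (1 - 2 * δ) * G z))
        (-(2 * (1 - δ)) * deriv G z / (1 + (1 - 2 * δ) * G z) ^ 2) z := by
    intro z hz
    refine (((hGd z hz).const_sub 1).div (((hGd z hz).const_mul (1 - 2 * δ : ℂ)).const_add 1)
      (hden z hz)).congr_deriv ?_
    congr 1
    ring
  have hsubc := Metric.ball_subset_closedBall (x := (0 : ℂ)) (ε := ‖z₀‖)
  have hz₀c : z₀ ∈ Metric.closedBall (0 : ℂ) ‖z₀‖ := by simp
  obtain ⟨m, hm, hjack⟩ := exists_one_le_mul_deriv_eq_of_norm_eq_one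
    (w := fun z => (1 - G z) / (1 + (1 - 2 * δ) * G z)) hz₀0
    (fun z hz => (hwd z (hsubc hz)).differentiableAt.differentiableWithinAt)
    (by
      intro z hz
      have h1 := hsq (G z)
      have h2 : ‖2 * δ * G z - 1‖ ^ 2 < 1 := pow_lt_one₀ (norm_nonneg _) (hball z hz) two_ne_zero
      have h3 : Complex.normSq (1 - G z) < Complex.normSq (1 + (1 - 2 * δ) * G z) := by
        nlinarith [mul_pos hcoef (sub_pos.2 h2)]
      rw [Complex.normSq_eq_norm_sq, Complex.normSq_eq_norm_sq] at h3
      rw [mem_ball_zero_iff, norm_div, div_lt_one (norm_pos_iff.2 (hden z (hsubc hz)))]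
      exact lt_of_pow_lt_pow_left₀ 2 (norm_nonneg _) h3)
    (by simp [hG0])
    (fun z hz => (hwd z hz).continuousAt.continuousWithinAt)
    (hwd z₀ hz₀c).differentiableAt
    (by
      have h1 := hsq (G z₀)
      rw [hone, Complex.normSq_eq_norm_sq, Complex.normSq_eq_norm_sq] at h1
      have h2 : ‖1 - G z₀‖ ^ 2 = ‖1 + (1 - 2 * δ) * G z₀‖ ^ 2 := by linarith
      rw [norm_div, div_eq_one_iff_eq (norm_ne_zero_iff.2 (hden z₀ hz₀c))]
      exact (pow_left_inj₀ (norm_nonneg _) (norm_nonneg _) two_ne_zero).1 h2)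
  rw [(hwd z₀ hz₀c).deriv] at hjack
  refine riccati_boundary_false hδ hδ1 hγ0 hγ hm
    (neg_half_lt_re_div_one_sub (by simpa using hz₀1)) hone ?_
  have hd := hden z₀ hz₀c
  have hode₀ := hode z₀ hz₀1
  generalize z₀ / (1 - z₀) = u at hode₀ ⊢
  field_simp at hjack
  linear_combination (-(2 * (1 - δ) : ℂ)) * hode₀ - hjack

theorem hfun_re_ge {α δ : ℝ} (hα1 : α < 1) (hδ : 1 / 2 ≤ δ) (hδ1 : δ < 1)
    (hγ : 3 - 2 * α ≤ (1 - δ) * (4 + 1 / δ)) {z : ℂ} (hz : z ∈ Metric.ball (0 : ℂ) 1) :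
    2 * δ - 1 ≤ (1 + z * deriv (deriv (hfun α)) z / deriv (hfun α) z).re := by
  have hk : ∀ z ∈ Metric.ball (0 : ℂ) 1,
      HasDerivAt (kfun α) ((1 - z) ^ ((2 * α - 2 : ℝ) : ℂ)) z :=
    fun z hz => hasDerivAt_kfun (by simpa using hz)
  have hh : DifferentiableOn ℂ (hfun α) (Metric.ball 0 1) := by
    rw [hfun_eq_dslope, Complex.differentiableOn_dslope (Metric.ball_mem_nhds 0 one_pos)]
    exact fun z hz => (hk z hz).differentiableAt.differentiableWithinAt
  have hh' : DifferentiableOn ℂ (deriv (hfun α)) (Metric.ball 0 1) :=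
    hh.deriv Metric.isOpen_ball
  have hmem : ∀ z ∈ Metric.ball (0 : ℂ) 1, Metric.ball (0 : ℂ) 1 ∈ nhds z :=
    fun z hz => Metric.isOpen_ball.mem_nhds hz
  have hslit : ∀ z ∈ Metric.ball (0 : ℂ) 1, 1 - z ∈ Complex.slitPlane :=
    fun z hz => one_sub_mem_slitPlane (by simpa using hz)
  have hlin : ∀ z : ℂ, HasDerivAt (fun z : ℂ => 1 - z) (-1) z := fun z => by
    simpa using (hasDerivAt_id z).const_sub 1
  have hkz : kfun α = fun z => z * hfun α z := by
    funext z
    by_cases hz : z = 0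
    · simp [hz, kfun_zero]
    · simp [hfun, hz, mul_div_cancel₀]
  have hfirst : ∀ z ∈ Metric.ball (0 : ℂ) 1,
      hfun α z + z * deriv (hfun α) z = (1 - z) ^ ((2 * α - 2 : ℝ) : ℂ) := by
    intro z hz
    have h1 := (hasDerivAt_id z).mul (hh.differentiableAt (hmem z hz)).hasDerivAt
    have h2 := hk z hz
    rw [hkz] at h2
    simpa using h1.unique h2
  have hsecond : ∀ z ∈ Metric.ball (0 : ℂ) 1,
      2 * deriv (hfun α) z + z * deriv (deriv (hfun α)) z
        = (2 - 2 * α) * (1 - z) ^ (-((3 - 2 * α : ℝ) : ℂ)) := by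
    intro z hz
    have h1 := (hh.differentiableAt (hmem z hz)).hasDerivAt.add
      ((hasDerivAt_id z).mul (hh'.differentiableAt (hmem z hz)).hasDerivAt)
    have h2 := (hlin z).cpow_const (c := ((2 * α - 2 : ℝ) : ℂ)) (hslit z hz)
    have h3 := h1.unique (h2.congr_of_eventuallyEq (Filter.eventually_of_mem (hmem z hz) hfirst))
    have hexp : ((2 * α - 2 : ℝ) : ℂ) - 1 = -((3 - 2 * α : ℝ) : ℂ) := by push_cast; ring
    rw [hexp] at h3
    simp only [id, one_mul] at h3
    rw [two_mul, add_assoc, h3]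
    push_cast
    ring
  have hβ : (2 - 2 * α : ℂ) ≠ 0 := by
    have : ((2 - 2 * α : ℝ) : ℂ) ≠ 0 := by
      rw [Complex.ofReal_ne_zero]; linarith
    simpa using this
  have hβ' : (1 - α : ℂ) ≠ 0 := fun h => hβ (by linear_combination 2 * h)
  set c : ℂ := ((3 - 2 * α : ℝ) : ℂ) with hc
  have hpow : ∀ z ∈ Metric.ball (0 : ℂ) 1, (1 - z) ^ c ≠ 0 := fun z hz => by
    rw [Ne, Complex.cpow_eq_zero_iff]
    exact fun h => Complex.slitPlane_ne_zero (hslit z hz) h.1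
  obtain ⟨G, hGdef⟩ : ∃ G : ℂ → ℂ,
      G = fun z => 2 / (2 - 2 * α) * ((1 - z) ^ c * deriv (hfun α) z) :=
    ⟨_, rfl⟩
  have hGd : ∀ z ∈ Metric.ball (0 : ℂ) 1, HasDerivAt G (2 / (2 - 2 * α) *
      (c * (1 - z) ^ (c - 1) * (-1) * deriv (hfun α) z
        + (1 - z) ^ c * deriv (deriv (hfun α)) z)) z := by
    intro z hz
    rw [hGdef]
    exact (((hlin z).cpow_const (c := c) (hslit z hz)).mul
      (hh'.differentiableAt (hmem z hz)).hasDerivAt).const_mul _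
  have hsecond' : ∀ z ∈ Metric.ball (0 : ℂ) 1,
      (1 - z) ^ c * (2 * deriv (hfun α) z + z * deriv (deriv (hfun α)) z) = 2 - 2 * α := by
    intro z hz
    rw [hsecond z hz, Complex.cpow_neg]
    field_simp [hpow z hz]
  have hbound := norm_two_mul_sub_one_le_of_riccati hδ hδ1 (γ := 3 - 2 * α) (by linarith) hγ
    (G := G) (fun z hz => (hGd z hz).differentiableAt.differentiableWithinAt)
    (by
      have h1 := hsecond' 0 (by simp)
      simp at h1
      simp only [hGdef, sub_zero, Complex.one_cpow, one_mul]
      rw [div_mul_eq_mul_div, h1, div_self hβ])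
    (by
      intro z hz
      have h0 : (1 - z) ≠ 0 := Complex.slitPlane_ne_zero (hslit z hz)
      rw [(hGd z hz).deriv, Complex.cpow_sub _ _ h0, Complex.cpow_one, ← hc, hGdef]
      have h1 := hsecond' z hz
      field_simp
      linear_combination (1 - z) * h1) z hz
  by_cases hd : deriv (hfun α) z = 0
  · simp [hd]
    linarith
  have hGz : G z ≠ 0 := by
    rw [hGdef]
    exact mul_ne_zero (div_ne_zero two_ne_zero hβ) (mul_ne_zero (hpow z hz) hd)
  have hquot : 1 + z * deriv (deriv (hfun α)) z / deriv (hfun α) z = 2 * (G z)⁻¹ - 1 := by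
    have h1 := hsecond' z hz
    have h2 := hpow z hz
    rw [hGdef]
    field_simp
    linear_combination h1
  have hδ0 : 0 < δ := by linarith
  have hre : δ ≤ (G z)⁻¹.re := by
    have h1 : ‖2 * δ * G z - 1‖ ^ 2 ≤ 1 := pow_le_one₀ (norm_nonneg _) hbound
    rw [Complex.inv_re, le_div_iff₀ (Complex.normSq_pos.2 hGz)]
    rw [← Complex.normSq_eq_norm_sq] at h1
    simp only [Complex.normSq_apply] at h1 ⊢
    simp at h1
    refine le_of_mul_le_mul_left ?_ hδ0
    nlinarith
  rw [hquot]
  simp only [Complex.sub_re, Complex.one_re, Complex.mul_re, Complex.re_ofNat, Complex.im_ofNat,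
    zero_mul, sub_zero]
  linarith

/-- for `0 < α < 1` and `z ∈ 𝔻`, one has
`Re(1 + z h_α''(z)/h_α'(z)) ≥ (4α-1)/5` when `1/2 ≤ α < 1`, and
`Re(1 + z h_α''(z)/h_α'(z)) ≥ α/(3-α)` when `0 < α ≤ 1/2`. -/
theorem hfun_re_lower_bounds (α : ℝ) (hα0 : 0 < α) (hα1 : α < 1) :
    ∀ z ∈ unitDisk,
      (1 / 2 ≤ α →
        (4 * α - 1) / 5 ≤ (1 + z * deriv (deriv (hfun α)) z / deriv (hfun α) z).re) ∧
      (α ≤ 1 / 2 →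
        α / (3 - α) ≤ (1 + z * deriv (deriv (hfun α)) z / deriv (hfun α) z).re) := by
  intro z hz
  constructor
  · intro hα
    have h := hfun_re_ge (δ := (2 + 2 * α) / 5) hα1 (by linarith) (by linarith)
      (by
        rw [← sub_nonneg]
        have : (1 - (2 + 2 * α) / 5) * (4 + 1 / ((2 + 2 * α) / 5)) - (3 - 2 * α)
            = (3 - 2 * α) ^ 2 / (5 * (2 + 2 * α)) := by field_simp; ring
        rw [this]
        positivity) hz
    linarith
  · intro hα
    have h3 : 0 < 3 - α := by linarith
    have h := hfun_re_ge (δ := 3 / (2 * (3 - α))) hα1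
      (by rw [div_le_div_iff₀ two_pos (by positivity)]; linarith)
      (by rw [div_lt_one (by positivity)]; linarith)
      (by
        rw [← sub_nonneg]
        have : (1 - 3 / (2 * (3 - α))) * (4 + 1 / (3 / (2 * (3 - α)))) - (3 - 2 * α)
            = (3 - 2 * α) * (4 * α) / (6 * (3 - α)) := by field_simp; ring
        rw [this]
        exact div_nonneg (mul_nonneg (by linarith) (by linarith)) (by linarith)) hz
    have : 2 * (3 / (2 * (3 - α))) - 1 = α / (3 - α) := by field_simp; ring
    linarith
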